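/- Let L ≥ 1 be an integer, ξ₀ ≥ 0, and c > 0. Then e^{-Lξ₀} · Σ_{i=0}^∞ ((Lξ₀)^i/i!) · γ(L+i, c)/Γ(L+i) ≤ (e^{-ξ₀} · Σ_{i=0}^∞ (ξ₀^i/i!) · γ(1+i, c)/Γ(1+i))^L. -/

import Mathlib

/-- The lower incomplete gamma function `γ(s, x) = ∫₀^x t^{s-1} e^{-t} dt`. -/
noncomputable def lincGamma (s x : ℝ) : ℝ :=
  ∫ t in (0:ℝ)..x, t ^ (s - 1) * Real.exp (-t)

/-!
With power threshold `c`, the outage probability is `P(X₁ + ⋯ + X_L ≤ c)` for HARQ-CC and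
`P(X₁ ≤ c) ⋯ P(X_L ≤ c)` for Type-I HARQ, with `Xⱼ ≥ 0` independent. If a sum of nonnegative
numbers is at most `c`, then so is each of them. For gamma variables this compares the integral of
a convolution over the triangle `s + t ≤ c` with the integral over the square `s, t ≤ c`; the
received powers are Poisson mixtures of gamma variables, to which the inequality passes because
`(ξ + η)ⁿ / n!` is the Cauchy product of `ξⁱ / i!` and `ηʲ / j!`.
-/

section

open MeasureTheory Real Set

theorem integrableOn_Ioi_indicator_Iic {E : Type*} [NormedAddCommGroup E] {f : ℝ → E} {a b : ℝ}
    (hab : a ≤ b) (hf : IntervalIntegrable f volume a b) :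
    IntegrableOn ((Iic b).indicator f) (Ioi a) := by
  rw [integrableOn_indicator_iff measurableSet_Iic, inter_comm, Ioi_inter_Iic]
  exact (intervalIntegrable_iff_integrableOn_Ioc_of_le hab).1 hf

theorem setIntegral_Ioi_indicator_Iic {E : Type*} [NormedAddCommGroup E] [NormedSpace ℝ E]
    (f : ℝ → E) {a b : ℝ} (hab : a ≤ b) :
    ∫ t in Ioi a, (Iic b).indicator f t = ∫ t in a..b, f t := by
  rw [setIntegral_indicator measurableSet_Iic, Ioi_inter_Iic, intervalIntegral.integral_of_le hab]

theorem integral_convolution_le_mul_integral {f g : ℝ → ℝ} {c : ℝ} (hc : 0 ≤ c)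
    (hf : IntervalIntegrable f volume 0 c) (hg : IntervalIntegrable g volume 0 c)
    (hf₀ : ∀ t ∈ Icc 0 c, 0 ≤ f t) (hg₀ : ∀ t ∈ Icc 0 c, 0 ≤ g t) :
    ∫ x in 0..c, ∫ t in 0..x, f t * g (x - t) ≤ (∫ t in 0..c, f t) * ∫ t in 0..c, g t := by
  set F := (Iic c).indicator f
  set G := (Iic c).indicator g
  have truncation_nonneg {h : ℝ → ℝ} (hh : ∀ t ∈ Icc 0 c, 0 ≤ h t) {t : ℝ} (ht : 0 ≤ t) :
      0 ≤ (Iic c).indicator h t :=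
    indicator_apply_nonneg fun htc ↦ hh t ⟨ht, htc⟩
  have hF : IntegrableOn F (Ioi 0) := integrableOn_Ioi_indicator_Iic hc hf
  have hG : IntegrableOn G (Ioi 0) := integrableOn_Ioi_indicator_Iic hc hg
  have hconv_nonneg (x : ℝ) (hx : 0 < x) : 0 ≤ ∫ t in 0..x, F t * G (x - t) :=
    intervalIntegral.integral_nonneg hx.le fun t ht ↦
      mul_nonneg (truncation_nonneg hf₀ ht.1) (truncation_nonneg hg₀ (sub_nonneg.2 ht.2))
  have hconv_integrable : IntegrableOn (fun x ↦ ∫ t in 0..x, F t * G (x - t)) (Ioi 0) :=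
    (integrable_indicator_iff measurableSet_Ioi).1 <|
      integrable_posConvolution hF hG (ContinuousLinearMap.mul ℝ ℝ)
  calc
    ∫ x in 0..c, ∫ t in 0..x, f t * g (x - t)
    _ = ∫ x in Ioc 0 c, ∫ t in 0..x, F t * G (x - t) := by
        rw [intervalIntegral.integral_of_le hc]
        refine setIntegral_congr_fun measurableSet_Ioc fun x hx ↦
          intervalIntegral.integral_congr fun t ht ↦ ?_
        rw [uIcc_of_le hx.1.le] at ht
        have htc : t ∈ Iic c := ht.2.trans hx.2
        have hxtc : x - t ∈ Iic c := (sub_le_self x ht.1).trans hx.2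
        simp only [F, G, indicator_of_mem htc, indicator_of_mem hxtc]
    _ ≤ ∫ x in Ioi 0, ∫ t in 0..x, F t * G (x - t) :=
        setIntegral_mono_set hconv_integrable
          ((ae_restrict_iff' measurableSet_Ioi).2 (ae_of_all _ hconv_nonneg))
          Ioc_subset_Ioi_self.eventuallyLE
    _ = (∫ t in Ioi 0, F t) * ∫ t in Ioi 0, G t :=
        integral_posConvolution hF hG (ContinuousLinearMap.mul ℝ ℝ)
    _ = (∫ t in 0..c, f t) * ∫ t in 0..c, g t := by
        rw [setIntegral_Ioi_indicator_Iic f hc, setIntegral_Ioi_indicator_Iic g hc]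

theorem integral_rpow_mul_sub_rpow {a b x : ℝ} (ha : 0 < a) (hb : 0 < b) (hx : 0 < x) :
    ∫ t in 0..x, t ^ (a - 1) * (x - t) ^ (b - 1) =
      x ^ (a + b - 1) * ProbabilityTheory.beta a b := by
  have hcomplex := Complex.betaIntegral_scaled a b hx
  rw [Complex.betaIntegral_eq_Gamma_mul_div _ _ (by simpa) (by simpa)] at hcomplex
  apply Complex.ofReal_injective
  rw [← intervalIntegral.integral_ofReal, ProbabilityTheory.beta]
  push_cast [Complex.ofReal_cpow hx.le, ← Complex.Gamma_ofReal]
  rw [← hcomplex]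
  refine intervalIntegral.integral_congr fun t ht ↦ ?_
  rw [uIcc_of_le hx.le] at ht
  push_cast [Complex.ofReal_cpow ht.1, Complex.ofReal_cpow (sub_nonneg.2 ht.2)]
  rfl

theorem intervalIntegrable_rpow_mul_exp_neg {a : ℝ} (ha : 0 < a) (x y : ℝ) :
    IntervalIntegrable (fun t : ℝ ↦ t ^ (a - 1) * exp (-t)) volume x y :=
  (intervalIntegral.intervalIntegrable_rpow' (by linarith)).mul_continuousOn (by fun_prop)

theorem lincGamma_nonneg (a : ℝ) {c : ℝ} (hc : 0 ≤ c) : 0 ≤ lincGamma a c :=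
  intervalIntegral.integral_nonneg hc fun _ ht ↦
    mul_nonneg (rpow_nonneg ht.1 _) (exp_nonneg _)

theorem lincGamma_le_Gamma {a c : ℝ} (ha : 0 < a) (hc : 0 ≤ c) : lincGamma a c ≤ Gamma a := by
  simp_rw [lincGamma, Gamma_eq_integral ha, intervalIntegral.integral_of_le hc,
    mul_comm _ (exp _)]
  refine setIntegral_mono_set (GammaIntegral_convergent ha) ?_ Ioc_subset_Ioi_self.eventuallyLE
  exact (ae_restrict_iff' measurableSet_Ioi).2 <| ae_of_all _ fun t ht ↦
    mul_nonneg (exp_nonneg _) (rpow_nonneg (mem_Ioi.1 ht).le _)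

theorem lincGamma_add_mul_beta {a b c : ℝ} (ha : 0 < a) (hb : 0 < b) (hc : 0 ≤ c) :
    lincGamma (a + b) c * ProbabilityTheory.beta a b =
      ∫ x in 0..c, ∫ t in 0..x,
        (t ^ (a - 1) * exp (-t)) * ((x - t) ^ (b - 1) * exp (-(x - t))) := by
  rw [lincGamma, ← intervalIntegral.integral_mul_const]
  simp_rw [intervalIntegral.integral_of_le hc]
  refine setIntegral_congr_fun measurableSet_Ioc fun x hx ↦ ?_
  calc
    x ^ (a + b - 1) * exp (-x) * ProbabilityTheory.beta a b
    _ = ∫ t in 0..x, exp (-x) * (t ^ (a - 1) * (x - t) ^ (b - 1)) := by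
        rw [intervalIntegral.integral_const_mul, integral_rpow_mul_sub_rpow ha hb hx.1]
        ring
    _ = _ := intervalIntegral.integral_congr fun t _ ↦ by
        have hexp : exp (-x) = exp (-t) * exp (-(x - t)) := by
          rw [← exp_add]
          ring_nf
        simp only [hexp]
        ring

/-- The regularized lower incomplete gamma function `P(a, c) = γ(a, c) / Γ(a)`: the probability
that a gamma variable of shape `a` and rate `1` is at most `c`. -/
noncomputable def regLincGamma (a c : ℝ) : ℝ :=
  lincGamma a c / Gamma a

theorem regLincGamma_nonneg {a c : ℝ} (ha : 0 < a) (hc : 0 ≤ c) : 0 ≤ regLincGamma a c :=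
  div_nonneg (lincGamma_nonneg a hc) (Gamma_pos_of_pos ha).le

theorem regLincGamma_le_one {a c : ℝ} (ha : 0 < a) (hc : 0 ≤ c) : regLincGamma a c ≤ 1 :=
  div_le_one_of_le₀ (lincGamma_le_Gamma ha hc) (Gamma_pos_of_pos ha).le

theorem regLincGamma_add_le_mul {a b c : ℝ} (ha : 0 < a) (hb : 0 < b) (hc : 0 ≤ c) :
    regLincGamma (a + b) c ≤ regLincGamma a c * regLincGamma b c := by
  have hlinc : lincGamma (a + b) c * ProbabilityTheory.beta a b ≤ lincGamma a c * lincGamma b c :=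
    (lincGamma_add_mul_beta ha hb hc).trans_le <|
      integral_convolution_le_mul_integral hc (intervalIntegrable_rpow_mul_exp_neg ha _ _)
        (intervalIntegrable_rpow_mul_exp_neg hb _ _)
        (fun _ ht ↦ mul_nonneg (rpow_nonneg ht.1 _) (exp_nonneg _))
        (fun _ ht ↦ mul_nonneg (rpow_nonneg ht.1 _) (exp_nonneg _))
  have hΓa := Gamma_pos_of_pos ha
  have hΓb := Gamma_pos_of_pos hb
  rw [regLincGamma, regLincGamma, regLincGamma, div_mul_div_comm, le_div_iff₀ (mul_pos hΓa hΓb)]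
  calc
    lincGamma (a + b) c / Gamma (a + b) * (Gamma a * Gamma b)
    _ = lincGamma (a + b) c * ProbabilityTheory.beta a b := by
        rw [ProbabilityTheory.beta]
        ring
    _ ≤ lincGamma a c * lincGamma b c := hlinc

end

section

open Finset Real
open scoped Nat

theorem add_pow_div_factorial {K : Type*} [Field K] [CharZero K] (x y : K) (n : ℕ) :
    (x + y) ^ n / n ! = ∑ p ∈ antidiagonal n, x ^ p.1 / p.1 ! * (y ^ p.2 / p.2 !) := by
  rw [(Commute.all x y).add_pow', sum_div]
  refine sum_congr rfl fun ⟨i, j⟩ hij ↦ ?_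
  obtain rfl : i + j = n := mem_antidiagonal.1 hij
  have hfactorial : ((i + j)! : K) ≠ 0 := Nat.cast_ne_zero.2 (Nat.factorial_ne_zero _)
  rw [nsmul_eq_mul, Nat.cast_add_choose]
  field_simp

theorem tsum_add_pow_div_factorial_mul_le {x y : ℝ} (hx : 0 ≤ x) (hy : 0 ≤ y) {u v w : ℕ → ℝ}
    (hu : Summable fun i ↦ x ^ i / i ! * u i) (hv : Summable fun i ↦ y ^ i / i ! * v i)
    (hw : Summable fun i ↦ (x + y) ^ i / i ! * w i) (hwuv : ∀ i j, w (i + j) ≤ u i * v j) :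
    ∑' i, (x + y) ^ i / i ! * w i ≤
      (∑' i, x ^ i / i ! * u i) * ∑' i, y ^ i / i ! * v i := by
  rw [tsum_mul_tsum_eq_tsum_sum_antidiagonal_of_summable_norm hu.norm hv.norm]
  refine hw.tsum_le_tsum (fun n ↦ ?_)
    (summable_norm_sum_mul_antidiagonal_of_summable_norm hu.norm hv.norm).of_norm
  rw [add_pow_div_factorial, sum_mul]
  refine sum_le_sum fun ⟨i, j⟩ hij ↦ ?_
  obtain rfl : i + j = n := mem_antidiagonal.1 hij
  calc
    x ^ i / i ! * (y ^ j / j !) * w (i + j)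
    _ ≤ x ^ i / i ! * (y ^ j / j !) * (u i * v j) := by
        gcongr
        exact hwuv i j
    _ = x ^ i / i ! * u i * (y ^ j / j ! * v j) := by ring

/-- The distribution function at `c` of the noncentral gamma distribution of shape `a` and
noncentrality `ξ`, that is, of a gamma variable of rate `1` and random shape `a + N` with `N`
Poisson of mean `ξ`. One HARQ round of normalized LoS power `ξ` has shape `1`; chase combining adds
the shapes and the powers of its rounds. -/
noncomputable def noncentralGammaCDF (a ξ c : ℝ) : ℝ :=
  exp (-ξ) * ∑' i : ℕ, ξ ^ i / i ! * regLincGamma (a + i) c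

theorem summable_pow_div_factorial_mul_regLincGamma {a c : ℝ} (ha : 0 < a) (hc : 0 ≤ c) (ξ : ℝ) :
    Summable fun i : ℕ ↦ ξ ^ i / i ! * regLincGamma (a + i) c := by
  refine .of_norm_bounded (summable_pow_div_factorial ξ).norm fun i ↦ ?_
  have hai : 0 < a + i := by positivity
  rw [norm_mul, norm_of_nonneg (regLincGamma_nonneg hai hc)]
  exact mul_le_of_le_one_right (norm_nonneg _) (regLincGamma_le_one hai hc)

theorem noncentralGammaCDF_nonneg {a ξ c : ℝ} (ha : 0 < a) (hξ : 0 ≤ ξ) (hc : 0 ≤ c) :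
    0 ≤ noncentralGammaCDF a ξ c :=
  mul_nonneg (exp_nonneg _) <| tsum_nonneg fun i ↦
    mul_nonneg (by positivity) (regLincGamma_nonneg (by positivity) hc)

theorem noncentralGammaCDF_add_le_mul {a b ξ η c : ℝ} (ha : 0 < a) (hb : 0 < b) (hξ : 0 ≤ ξ)
    (hη : 0 ≤ η) (hc : 0 ≤ c) :
    noncentralGammaCDF (a + b) (ξ + η) c ≤
      noncentralGammaCDF a ξ c * noncentralGammaCDF b η c := by
  have hshape (i j : ℕ) : regLincGamma (a + b + (i + j : ℕ)) c ≤
      regLincGamma (a + i) c * regLincGamma (b + j) c := by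
    rw [Nat.cast_add, add_add_add_comm]
    exact regLincGamma_add_le_mul (by positivity) (by positivity) hc
  have hseries := tsum_add_pow_div_factorial_mul_le hξ hη
    (summable_pow_div_factorial_mul_regLincGamma ha hc ξ)
    (summable_pow_div_factorial_mul_regLincGamma hb hc η)
    (summable_pow_div_factorial_mul_regLincGamma (add_pos ha hb) hc (ξ + η)) hshape
  rw [noncentralGammaCDF, noncentralGammaCDF, noncentralGammaCDF, mul_mul_mul_comm, ← exp_add,
    ← neg_add]
  exact mul_le_mul_of_nonneg_left hseries (exp_nonneg _)

theorem harqCC_le_typeI_general {ι : Type*} {s : Finset ι} (hs : s.Nonempty) {a ξ : ι → ℝ}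
    (ha : ∀ i ∈ s, 0 < a i) (hξ : ∀ i ∈ s, 0 ≤ ξ i) {c : ℝ} (hc : 0 ≤ c) :
    noncentralGammaCDF (∑ i ∈ s, a i) (∑ i ∈ s, ξ i) c ≤
      ∏ i ∈ s, noncentralGammaCDF (a i) (ξ i) c := by
  induction hs using Finset.Nonempty.cons_induction with
  | singleton i => simp only [sum_singleton, prod_singleton, le_refl]
  | cons i s hi hs ih =>
    simp only [forall_mem_cons] at ha hξ
    rw [sum_cons, sum_cons, prod_cons]
    calc
      noncentralGammaCDF (a i + ∑ j ∈ s, a j) (ξ i + ∑ j ∈ s, ξ j) c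
      _ ≤ noncentralGammaCDF (a i) (ξ i) c *
            noncentralGammaCDF (∑ j ∈ s, a j) (∑ j ∈ s, ξ j) c :=
          noncentralGammaCDF_add_le_mul ha.1 (sum_pos ha.2 hs) hξ.1 (sum_nonneg hξ.2) hc
      _ ≤ noncentralGammaCDF (a i) (ξ i) c * ∏ j ∈ s, noncentralGammaCDF (a j) (ξ j) c :=
          mul_le_mul_of_nonneg_left (ih ha.2 hξ.2) (noncentralGammaCDF_nonneg ha.1 hξ.1 hc)

end

/-- HARQ-CC always outperforms Type-I HARQ: the HARQ-CC outage probability (left side,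
with `ξ = Lξ₀`) is at most the Type-I HARQ outage probability after `L` rounds (right side). -/
theorem harqCC_le_typeI (L : ℕ) (hL : 1 ≤ L) (ξ₀ : ℝ) (hξ₀ : 0 ≤ ξ₀) (c : ℝ) (hc : 0 < c) :
    Real.exp (-(L * ξ₀)) *
        ∑' i : ℕ, (L * ξ₀) ^ i / (Nat.factorial i) * (lincGamma (L + i) c / Real.Gamma (L + i))
      ≤ (Real.exp (-ξ₀) *
          ∑' i : ℕ, ξ₀ ^ i / (Nat.factorial i) * (lincGamma (1 + i) c / Real.Gamma (1 + i))) ^ L := by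
  simpa only [Finset.sum_const, Finset.prod_const, Finset.card_range, nsmul_eq_mul, mul_one,
    noncentralGammaCDF, regLincGamma] using
    harqCC_le_typeI_general (Finset.nonempty_range_iff.2 (Nat.one_le_iff_ne_zero.1 hL))
      (a := fun _ ↦ 1) (ξ := fun _ ↦ ξ₀) (fun _ _ ↦ one_pos) (fun _ _ ↦ hξ₀) hc.le
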